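/- Fix c > 0 and consider the optimization problem O: minimize Σ_{a=1}^K N_a over allocations N = (N_1,…,N_K) ∈ ℝ_{≥0}^K subject to W_a(N_1, N_a) ≥ c for every a ∈ {2,…,K}. Then O has a unique optimal solution N* = (N_1*,…,N_K*), and N* is characterized as the unique N ∈ ℝ_{≥0}^K satisfying simultaneously W_a(N_1, N_a) = c for every a ∈ {2,…,K} (all constraints tight) and Σ_{a=2}^K d(μ_1, x_{1,a}(N_1,N_a))/d(μ_a, x_{1,a}(N_1,N_a)) = 1. Moreover N_1* ≥ max_{a∈{2,…,K}} c/d(μ_1, μ_a) and N_a* ≥ c/d(μ_a, μ_1) for every a ∈ {2,…,K}. -/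

import Mathlib

open scoped BigOperators

/-- A single-parameter exponential family, given by the log-partition function `b`,
smooth with positive second derivative on an open interval `Θ`, together with the
inverse `θof` of `b'` on the set of means `S = b'(Θ)`. -/
structure SPEF where
  Θ : Set ℝ
  Θ_isOpen : IsOpen Θ
  Θ_ordConnected : Set.OrdConnected Θ
  Θ_nonempty : Θ.Nonempty
  b : ℝ → ℝ
  b_smooth : ContDiffOn ℝ (⊤ : ℕ∞) b Θ
  b_conv : ∀ t ∈ Θ, 0 < iteratedDeriv 2 b t
  θof : ℝ → ℝ
  θof_mem : ∀ μ ∈ deriv b '' Θ, θof μ ∈ Θ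
  θof_spec : ∀ μ ∈ deriv b '' Θ, deriv b (θof μ) = μ

namespace SPEF

/-- The set of means of the family. -/
def S (F : SPEF) : Set ℝ := deriv F.b '' F.Θ

/-- KL divergence `d(μ, x)` between the members of the family with means `μ` and `x`. -/
noncomputable def d (F : SPEF) (μ x : ℝ) : ℝ :=
  (F.θof μ - F.θof x) * μ - F.b (F.θof μ) + F.b (F.θof x)

end SPEF

/-- A `K`-armed bandit instance with arm distributions in a fixed SPEF; arm `0`
(the paper's arm `1`) is the unique best arm. -/
structure Bandit (K : ℕ) [NeZero K] extends SPEF where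
  two_le : 2 ≤ K
  μ : Fin K → ℝ
  μ_mem : ∀ a, μ a ∈ SPEF.S toSPEF
  μ_best : ∀ a : Fin K, a ≠ 0 → μ a < μ 0

namespace Bandit

variable {K : ℕ} [NeZero K]

/-- KL divergence of the underlying family. -/
noncomputable def d (M : Bandit K) : ℝ → ℝ → ℝ := M.toSPEF.d

/-- The weighted mean `x_{1,a}(N₁, N_a)`. -/
noncomputable def x1 (M : Bandit K) (a : Fin K) (N1 Na : ℝ) : ℝ :=
  (N1 * M.μ 0 + Na * M.μ a) / (N1 + Na)

/-- The index `W_a(N₁, N_a)` of an arm `a ≠ 1`. -/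
noncomputable def W (M : Bandit K) (a : Fin K) (N1 Na : ℝ) : ℝ :=
  N1 * M.d (M.μ 0) (M.x1 a N1 Na) + Na * M.d (M.μ a) (M.x1 a N1 Na)

/-- The set `{2, …, K}` of suboptimal arms. -/
def alt (K : ℕ) [NeZero K] : Finset (Fin K) := Finset.univ.filter (fun a => a ≠ 0)

/-- The anchor function `g(μ, N)`. -/
noncomputable def g (M : Bandit K) (Nv : Fin K → ℝ) : ℝ :=
  (∑ a ∈ alt K, M.d (M.μ 0) (M.x1 a (Nv 0) (Nv a)) / M.d (M.μ a) (M.x1 a (Nv 0) (Nv a))) - 1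

end Bandit

/-- A strictly monotone right inverse of an injective continuous function is continuous. -/
theorem StrictMonoOn.continuousOn_of_rightInvOn {f g : ℝ → ℝ} {s u : Set ℝ} (hs : IsOpen s)
    (hu : IsOpen u) (hf : ContinuousOn f s) (hinj : Set.InjOn f s) (hg : StrictMonoOn g u)
    (hmaps : Set.MapsTo g u s) (hfg : Set.RightInvOn g f u) : ContinuousOn g u := by
  intro y hy
  refine (hg.continuousAt_of_image_mem_nhds (hu.mem_nhds hy) ?_).continuousWithinAt
  have hgy : s ∈ nhds (g y) := hs.mem_nhds (hmaps hy)
  have hfu : f ⁻¹' u ∈ nhds (g y) := by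
    refine (hf.continuousAt hgy).preimage_mem_nhds ?_
    rw [hfg hy]
    exact hu.mem_nhds hy
  filter_upwards [hgy, hfu] with t hts htu
  exact ⟨f t, htu, hinj (hmaps htu) hts (hfg htu)⟩

/-- A strictly antitone right inverse of an injective continuous function is continuous. -/
theorem StrictAntiOn.continuousOn_of_rightInvOn {f g : ℝ → ℝ} {s u : Set ℝ} (hs : IsOpen s)
    (hu : IsOpen u) (hf : ContinuousOn f s) (hinj : Set.InjOn f s) (hg : StrictAntiOn g u)
    (hmaps : Set.MapsTo g u s) (hfg : Set.RightInvOn g f u) : ContinuousOn g u := by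
  have key : ContinuousOn (fun y => -g y) u := by
    refine StrictMonoOn.continuousOn_of_rightInvOn (f := fun t => f (-t)) (s := Neg.neg ⁻¹' s)
      (hs.preimage continuous_neg) hu
      (hf.comp continuous_neg.continuousOn (Set.mapsTo_preimage _ _)) ?_
      (fun x hx y hy hxy => neg_lt_neg (hg hx hy hxy)) ?_ ?_
    · intro x hx y hy hxy
      exact neg_injective (hinj hx hy hxy)
    · intro y hy
      simpa using hmaps hy
    · intro y hy
      simpa using hfg hy
  exact (continuous_neg.comp_continuousOn key).congr fun y _ => (neg_neg (g y)).symm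

/-- Simultaneous level equations `h a (t a) = v` together with the normalisation
`∑ a, f a (t a) = 1` are solvable when all the `h a` and `f a` are decreasing. -/
theorem exists_common_level_sum_eq_one {ι : Type*} (s : Finset ι) (hs : s.Nonempty)
    (l u L : ι → ℝ) (h f : ι → ℝ → ℝ)
    (hcont : ∀ a ∈ s, ContinuousOn (h a) (Set.Ioo (l a) (u a)))
    (hanti : ∀ a ∈ s, StrictAntiOn (h a) (Set.Ioo (l a) (u a)))
    (hmaps : ∀ a ∈ s, Set.MapsTo (h a) (Set.Ioo (l a) (u a)) (Set.Ioo 0 (L a)))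
    (hsurj : ∀ a ∈ s, Set.SurjOn (h a) (Set.Ioo (l a) (u a)) (Set.Ioo 0 (L a)))
    (fcont : ∀ a ∈ s, ContinuousOn (f a) (Set.Ioo (l a) (u a)))
    (fanti : ∀ a ∈ s, AntitoneOn (f a) (Set.Ioo (l a) (u a)))
    (fpos : ∀ a ∈ s, ∀ t ∈ Set.Ioo (l a) (u a), 0 < f a t)
    (fsmall : ∀ a ∈ s, ∀ ε > 0, ∃ t ∈ Set.Ioo (l a) (u a), f a t ≤ ε)
    (flarge : ∀ a ∈ s, ∃ t ∈ Set.Ioo (l a) (u a), 1 ≤ f a t) :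
    ∃ v > 0, ∃ t : ι → ℝ, (∀ a ∈ s, t a ∈ Set.Ioo (l a) (u a) ∧ h a (t a) = v) ∧
      ∑ a ∈ s, f a (t a) = 1 := by
  classical
  obtain ⟨a₀, ha₀, hmin⟩ := s.exists_min_image L hs
  have hsub : ∀ a ∈ s, Set.Ioo 0 (L a₀) ⊆ Set.Ioo 0 (L a) := fun a ha =>
    Set.Ioo_subset_Ioo_right (hmin a ha)
  have hex : ∀ a v, ∃ t, a ∈ s → v ∈ Set.Ioo 0 (L a) → t ∈ Set.Ioo (l a) (u a) ∧ h a t = v := by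
    intro a v
    by_cases hav : a ∈ s ∧ v ∈ Set.Ioo 0 (L a)
    · obtain ⟨t, ht, htv⟩ := hsurj a hav.1 hav.2
      exact ⟨t, fun _ _ => ⟨ht, htv⟩⟩
    · exact ⟨0, fun h₁ h₂ => absurd ⟨h₁, h₂⟩ hav⟩
  choose g hg using hex
  have ganti : ∀ a ∈ s, StrictAntiOn (g a) (Set.Ioo 0 (L a)) := by
    intro a ha v hv w hw hvw
    obtain ⟨h₁, h₂⟩ := hg a v ha hv
    obtain ⟨h₃, h₄⟩ := hg a w ha hw
    rw [← (hanti a ha).lt_iff_gt h₁ h₃, h₂, h₄]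
    exact hvw
  have gcont : ∀ a ∈ s, ContinuousOn (g a) (Set.Ioo 0 (L a)) := fun a ha =>
    (ganti a ha).continuousOn_of_rightInvOn isOpen_Ioo isOpen_Ioo (hcont a ha)
      (hanti a ha).injOn (fun v hv => (hg a v ha hv).1) (fun v hv => (hg a v ha hv).2)
  have Gcont : ContinuousOn (fun v => ∑ a ∈ s, f a (g a v)) (Set.Ioo 0 (L a₀)) :=
    continuousOn_finsetSum _ fun a ha => (fcont a ha).comp ((gcont a ha).mono (hsub a ha))
      fun v hv => (hg a v ha (hsub a ha hv)).1
  -- a level at which the sum is at least one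
  obtain ⟨p, hp, hfp⟩ := flarge a₀ ha₀
  have hv₁ := hmaps a₀ ha₀ hp
  have hG₁ : 1 ≤ ∑ a ∈ s, f a (g a (h a₀ p)) := by
    have hgp : g a₀ (h a₀ p) = p :=
      (hanti a₀ ha₀).injOn (hg a₀ _ ha₀ hv₁).1 hp (hg a₀ _ ha₀ hv₁).2
    calc 1 ≤ f a₀ (g a₀ (h a₀ p)) := by rwa [hgp]
      _ ≤ _ := Finset.single_le_sum (f := fun a => f a (g a (h a₀ p)))
          (fun a ha => (fpos a ha _ (hg a _ ha (hsub a ha hv₁)).1).le) ha₀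
  -- a level at which the sum is at most one
  have hcard : (0 : ℝ) < s.card := by exact_mod_cast hs.card_pos
  have hq : ∀ a, ∃ q, a ∈ s → q ∈ Set.Ioo (l a) (u a) ∧ f a q ≤ (s.card : ℝ)⁻¹ := by
    intro a
    by_cases ha : a ∈ s
    · obtain ⟨q, hq, hfq⟩ := fsmall a ha _ (inv_pos.2 hcard)
      exact ⟨q, fun _ => ⟨hq, hfq⟩⟩
    · exact ⟨0, fun h₁ => absurd h₁ ha⟩
  choose q hq using hq
  obtain ⟨a₁, ha₁, hmin₁⟩ := s.exists_min_image (fun a => h a (q a)) hs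
  have hv₂ : h a₁ (q a₁) ∈ Set.Ioo 0 (L a₀) :=
    ⟨(hmaps a₁ ha₁ (hq a₁ ha₁).1).1,
      (hmin₁ a₀ ha₀).trans_lt (hmaps a₀ ha₀ (hq a₀ ha₀).1).2⟩
  have hG₂ : ∑ a ∈ s, f a (g a (h a₁ (q a₁))) ≤ 1 := by
    calc ∑ a ∈ s, f a (g a (h a₁ (q a₁))) ≤ ∑ a ∈ s, (s.card : ℝ)⁻¹ := by
          refine Finset.sum_le_sum fun a ha => ?_
          obtain ⟨h₁, h₂⟩ := hg a _ ha (hsub a ha hv₂)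
          refine (fanti a ha (hq a ha).1 h₁ ?_).trans (hq a ha).2
          rw [← (hanti a ha).le_iff_ge h₁ (hq a ha).1, h₂]
          exact hmin₁ a ha
      _ = 1 := by
          rw [Finset.sum_const, nsmul_eq_mul, mul_inv_cancel₀ hcard.ne']
  obtain ⟨v, hv, hGv⟩ := isPreconnected_Ioo.intermediate_value hv₂ hv₁ Gcont ⟨hG₂, hG₁⟩
  exact ⟨v, hv.1, fun a => g a v, fun a ha => hg a v ha (hsub a ha hv), hGv⟩

namespace SPEF

variable (F : SPEF)

theorem continuousOn_deriv : ContinuousOn (deriv F.b) F.Θ :=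
  F.b_smooth.continuousOn_deriv_of_isOpen F.Θ_isOpen (by norm_cast)

theorem strictMonoOn_deriv : StrictMonoOn (deriv F.b) F.Θ := by
  refine strictMonoOn_of_deriv_pos F.Θ_ordConnected.convex F.continuousOn_deriv ?_
  intro t ht
  have := F.b_conv t (interior_subset ht)
  rwa [iteratedDeriv_succ, iteratedDeriv_one] at this

theorem ordConnected_S : F.S.OrdConnected :=
  (F.Θ_ordConnected.isPreconnected.image _ F.continuousOn_deriv).ordConnected

theorem isOpen_S : IsOpen F.S := by
  rw [isOpen_iff_mem_nhds]
  rintro _ ⟨t, ht, rfl⟩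
  obtain ⟨ε, hε, hball⟩ := Metric.isOpen_iff.1 F.Θ_isOpen t ht
  have hl : t - ε / 2 ∈ F.Θ := hball (by
    rw [Metric.mem_ball, Real.dist_eq, abs_lt]; constructor <;> linarith)
  have hr : t + ε / 2 ∈ F.Θ := hball (by
    rw [Metric.mem_ball, Real.dist_eq, abs_lt]; constructor <;> linarith)
  refine Filter.mem_of_superset (Ioo_mem_nhds
    (F.strictMonoOn_deriv hl ht (by linarith)) (F.strictMonoOn_deriv ht hr (by linarith)))
    (Set.Ioo_subset_Icc_self.trans
      (F.ordConnected_S.out (Set.mem_image_of_mem _ hl) (Set.mem_image_of_mem _ hr)))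

theorem strictMonoOn_θof : StrictMonoOn F.θof F.S := by
  intro x hx y hy hxy
  rw [← F.strictMonoOn_deriv.lt_iff_lt (F.θof_mem x hx) (F.θof_mem y hy), F.θof_spec x hx,
    F.θof_spec y hy]
  exact hxy

theorem continuousOn_θof : ContinuousOn F.θof F.S :=
  F.strictMonoOn_θof.continuousOn_of_rightInvOn F.Θ_isOpen F.isOpen_S F.continuousOn_deriv
    F.strictMonoOn_deriv.injOn F.θof_mem F.θof_spec

theorem continuousOn_d {μ : ℝ} : ContinuousOn (F.d μ) F.S := by
  unfold d
  exact (((continuousOn_const.sub F.continuousOn_θof).mul continuousOn_const).sub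
    continuousOn_const).add (F.b_smooth.continuousOn.comp F.continuousOn_θof F.θof_mem)

@[simp]
theorem d_self (μ : ℝ) : F.d μ μ = 0 := by
  unfold d
  ring

theorem d_pos {x y : ℝ} (hx : x ∈ F.S) (hy : y ∈ F.S) (hxy : x ≠ y) : 0 < F.d x y := by
  have hslope : ∀ s ∈ F.Θ, ∀ t ∈ F.Θ, s < t → ∃ r ∈ F.Θ, s < r ∧ r < t ∧
      deriv F.b r * (t - s) = F.b t - F.b s := by
    intro s hs t ht hst
    have hsub : Set.Icc s t ⊆ F.Θ := F.Θ_ordConnected.out hs ht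
    obtain ⟨r, hr, hrs⟩ := exists_deriv_eq_slope F.b hst (F.b_smooth.continuousOn.mono hsub)
      ((F.b_smooth.differentiableOn (by simp)).mono (Set.Ioo_subset_Icc_self.trans hsub))
    refine ⟨r, hsub (Set.Ioo_subset_Icc_self hr), hr.1, hr.2, ?_⟩
    rw [hrs, div_mul_cancel₀ _ (sub_pos.2 hst).ne']
  have hθx := F.θof_mem x hx
  have hθy := F.θof_mem y hy
  unfold d
  rcases hxy.lt_or_gt with h | h
  · obtain ⟨r, hr, h₁, h₂, h₃⟩ := hslope _ hθx _ hθy (F.strictMonoOn_θof hx hy h)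
    have := F.strictMonoOn_deriv hθx hr h₁
    rw [F.θof_spec x hx] at this
    nlinarith
  · obtain ⟨r, hr, h₁, h₂, h₃⟩ := hslope _ hθy _ hθx (F.strictMonoOn_θof hy hx h)
    have := F.strictMonoOn_deriv hr hθx h₂
    rw [F.θof_spec x hx] at this
    nlinarith

theorem d_nonneg {x y : ℝ} (hx : x ∈ F.S) (hy : y ∈ F.S) : 0 ≤ F.d x y := by
  rcases eq_or_ne x y with rfl | h
  · simp
  · exact (F.d_pos hx hy h).le

/-- The three-point identity of the Bregman divergence `d`. -/
theorem d_eq_add_add (μ x y : ℝ) :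
    F.d μ y = F.d μ x + F.d x y + (F.θof y - F.θof x) * (x - μ) := by
  unfold d
  ring

/-- The compensation identity: the weighted divergence exceeds its value at the weighted mean by
the divergence from that mean. -/
theorem weighted_d_eq {n m μ ν x : ℝ} (hx : (n + m) * x = n * μ + m * ν) (y : ℝ) :
    n * F.d μ y + m * F.d ν y = n * F.d μ x + m * F.d ν x + (n + m) * F.d x y := by
  unfold d
  linear_combination (F.θof y - F.θof x) * hx

theorem strictMonoOn_d (μ : ℝ) : StrictMonoOn (F.d μ) (F.S ∩ Set.Ici μ) := by
  rintro x ⟨hx, hμx⟩ y ⟨hy, -⟩ hxy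
  rw [F.d_eq_add_add μ x y]
  have h₁ := F.d_pos hx hy hxy.ne
  have h₂ := F.strictMonoOn_θof hx hy hxy
  nlinarith [mul_nonneg (sub_nonneg.2 h₂.le) (sub_nonneg.2 hμx)]

theorem strictAntiOn_d (μ : ℝ) : StrictAntiOn (F.d μ) (F.S ∩ Set.Iic μ) := by
  rintro x ⟨hx, -⟩ y ⟨hy, hyμ⟩ hxy
  rw [F.d_eq_add_add μ y x]
  have h₁ := F.d_pos hy hx hxy.ne'
  have h₂ := F.strictMonoOn_θof hx hy hxy
  nlinarith [mul_nonneg (sub_nonneg.2 h₂.le) (sub_nonneg.2 hyμ)]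

/-- The weight of the mean `q`, relative to that of `p`, at which the weighted mean is `x`. -/
noncomputable def mixRatio (p q x : ℝ) : ℝ := (p - x) / (x - q)

/-- The weighted divergence at the weighted mean `x`, per unit weight of the mean `p`. -/
noncomputable def level (p q x : ℝ) : ℝ := F.d p x + mixRatio p q x * F.d q x

variable {p q x y : ℝ}

theorem mixRatio_spec (hx : q < x) :
    (1 + mixRatio p q x) * x = 1 * p + mixRatio p q x * q := by
  have : x - q ≠ 0 := (sub_pos.2 hx).ne'
  unfold mixRatio
  field_simp
  ring

theorem mixRatio_pos (hx : x ∈ Set.Ioo q p) : 0 < mixRatio p q x :=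
  div_pos (sub_pos.2 hx.2) (sub_pos.2 hx.1)

theorem mixRatio_lt (hx : x ∈ Set.Ioo q p) (hxy : x < y) :
    mixRatio p q y < mixRatio p q x :=
  div_lt_div₀ (by linarith) (by linarith) (sub_pos.2 hx.2).le (sub_pos.2 hx.1)

theorem d_add_mixRatio_mul_d (hx : q < x) (y : ℝ) :
    F.d p y + mixRatio p q x * F.d q y = F.level p q x + (1 + mixRatio p q x) * F.d x y := by
  have := F.weighted_d_eq (mixRatio_spec (p := p) hx) y
  unfold level
  linarith

theorem continuousOn_level : ContinuousOn (F.level p q) (F.S ∩ Set.Ioi q) := by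
  unfold level mixRatio
  refine (F.continuousOn_d.mono Set.inter_subset_left).add
    (ContinuousOn.mul (ContinuousOn.div (by fun_prop) (by fun_prop) ?_)
      (F.continuousOn_d.mono Set.inter_subset_left))
  exact fun x hx => (sub_pos.2 hx.2).ne'

variable {F}

theorem continuousOn_d_div_d (hq : q ∈ F.S) :
    ContinuousOn (fun x => F.d p x / F.d q x) (F.S ∩ Set.Ioi q) :=
  (F.continuousOn_d.mono Set.inter_subset_left).div (F.continuousOn_d.mono Set.inter_subset_left)
    fun _ hx => (F.d_pos hq hx.1 (ne_of_lt hx.2)).ne'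

theorem Ioo_subset_S (hp : p ∈ F.S) (hq : q ∈ F.S) : Set.Ioo q p ⊆ F.S :=
  Set.Ioo_subset_Icc_self.trans (F.ordConnected_S.out hq hp)

theorem Ioo_subset_S_inter_Ioi (hp : p ∈ F.S) (hq : q ∈ F.S) :
    Set.Ioo q p ⊆ F.S ∩ Set.Ioi q :=
  fun _ hx => ⟨Ioo_subset_S hp hq hx, hx.1⟩

theorem strictAntiOn_level (hp : p ∈ F.S) (hq : q ∈ F.S) :
    StrictAntiOn (F.level p q) (Set.Ioo q p) := by
  intro x hx y hy hxy
  have hxS := Ioo_subset_S hp hq hx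
  have hyS := Ioo_subset_S hp hq hy
  have h₁ := F.d_add_mixRatio_mul_d (p := p) hy.1 x
  have h₂ : 0 ≤ (1 + mixRatio p q y) * F.d y x :=
    mul_nonneg (by linarith [mixRatio_pos hy]) (F.d_nonneg hyS hxS)
  have h₃ := mul_lt_mul_of_pos_right (mixRatio_lt hx hxy) (F.d_pos hq hxS hx.1.ne)
  have h₄ : F.level p q x = F.d p x + mixRatio p q x * F.d q x := rfl
  linarith

theorem mapsTo_level (hp : p ∈ F.S) (hq : q ∈ F.S) :
    Set.MapsTo (F.level p q) (Set.Ioo q p) (Set.Ioo 0 (F.d p q)) := by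
  intro x hx
  have hxS := Ioo_subset_S hp hq hx
  have hr := mixRatio_pos hx
  constructor
  · exact add_pos (F.d_pos hp hxS hx.2.ne') (mul_pos hr (F.d_pos hq hxS hx.1.ne))
  · have h₁ := F.d_add_mixRatio_mul_d (p := p) hx.1 q
    rw [d_self, mul_zero, add_zero] at h₁
    rw [h₁]
    have := mul_pos (add_pos one_pos hr) (F.d_pos hxS hq hx.1.ne')
    linarith

/-- A strict upper bound on the value at `p` of a function continuous on `F.S ∩ Set.Ioi q`
is an upper bound somewhere in `Set.Ioo q p`. -/
theorem exists_lt_of_continuousOn (hp : p ∈ F.S) (hqp : q < p) {φ : ℝ → ℝ} {v : ℝ}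
    (hφ : ContinuousOn φ (F.S ∩ Set.Ioi q)) (hv : φ p < v) : ∃ x ∈ Set.Ioo q p, φ x < v := by
  have hev : ∀ᶠ x in nhds p, φ x < v :=
    (hφ.continuousAt ((F.isOpen_S.inter isOpen_Ioi).mem_nhds ⟨hp, hqp⟩)).eventually_lt_const hv
  obtain ⟨x, h₁, h₂⟩ := ((hev.filter_mono nhdsWithin_le_nhds).and (Ioo_mem_nhdsLT hqp)).exists
  exact ⟨x, h₂, h₁⟩

/-- A strict lower bound on the value at `q` of a function continuous on `F.S`
is a lower bound somewhere in `Set.Ioo q p`. -/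
theorem exists_gt_of_continuousOn (hq : q ∈ F.S) (hqp : q < p) {φ : ℝ → ℝ} {v : ℝ}
    (hφ : ContinuousOn φ F.S) (hv : v < φ q) : ∃ x ∈ Set.Ioo q p, v < φ x := by
  have hev : ∀ᶠ x in nhds q, v < φ x :=
    (hφ.continuousAt (F.isOpen_S.mem_nhds hq)).eventually_const_lt hv
  obtain ⟨x, h₁, h₂⟩ := ((hev.filter_mono nhdsWithin_le_nhds).and (Ioo_mem_nhdsGT hqp)).exists
  exact ⟨x, h₂, h₁⟩

theorem surjOn_level (hp : p ∈ F.S) (hq : q ∈ F.S) (hqp : q < p) :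
    Set.SurjOn (F.level p q) (Set.Ioo q p) (Set.Ioo 0 (F.d p q)) := by
  intro v hv
  obtain ⟨x, hx, hxv⟩ := exists_gt_of_continuousOn hq hqp F.continuousOn_d hv.2
  obtain ⟨y, hy, hyv⟩ := exists_lt_of_continuousOn hp hqp (F.continuousOn_level (p := p))
    (show F.level p q p < v by simpa [level, mixRatio] using hv.1)
  have hx' : v ≤ F.level p q x := hxv.le.trans (le_add_of_nonneg_right
    (mul_nonneg (mixRatio_pos hx).le (F.d_nonneg hq (Ioo_subset_S hp hq hx))))
  exact isPreconnected_Ioo.intermediate_value hy hx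
    (F.continuousOn_level.mono (Ioo_subset_S_inter_Ioi hp hq)) ⟨hyv.le, hx'⟩

theorem d_div_d_pos (hp : p ∈ F.S) (hq : q ∈ F.S) (hx : x ∈ Set.Ioo q p) :
    0 < F.d p x / F.d q x :=
  div_pos (F.d_pos hp (Ioo_subset_S hp hq hx) hx.2.ne')
    (F.d_pos hq (Ioo_subset_S hp hq hx) hx.1.ne)

theorem antitoneOn_d_div_d (hp : p ∈ F.S) (hq : q ∈ F.S) :
    AntitoneOn (fun x => F.d p x / F.d q x) (Set.Ioo q p) := by
  intro x hx y hy hxy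
  have hxS := Ioo_subset_S hp hq hx
  have hyS := Ioo_subset_S hp hq hy
  exact div_le_div₀ (F.d_nonneg hp hxS)
    ((F.strictAntiOn_d p).antitoneOn ⟨hxS, hx.2.le⟩ ⟨hyS, hy.2.le⟩ hxy)
    (F.d_pos hq hxS hx.1.ne)
    ((F.strictMonoOn_d q).monotoneOn ⟨hxS, hx.1.le⟩ ⟨hyS, hy.1.le⟩ hxy)

theorem exists_one_le_d_div_d (hp : p ∈ F.S) (hq : q ∈ F.S) (hqp : q < p) :
    ∃ x ∈ Set.Ioo q p, 1 ≤ F.d p x / F.d q x := by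
  obtain ⟨x, hx, h⟩ := exists_gt_of_continuousOn (φ := fun x => F.d p x - F.d q x) (v := 0)
    hq hqp (F.continuousOn_d.sub F.continuousOn_d)
    (by simpa using F.d_pos hp hq hqp.ne')
  refine ⟨x, hx, ?_⟩
  rw [one_le_div₀ (F.d_pos hq (Ioo_subset_S hp hq hx) hx.1.ne)]
  exact (sub_pos.1 h).le

end SPEF

namespace Bandit

variable {K : ℕ} [NeZero K] (M : Bandit K) {c : ℝ} {a : Fin K} {n m x : ℝ}

theorem mem_alt : a ∈ alt K ↔ a ≠ 0 := by
  simp [alt]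

theorem alt_nonempty (hK : 2 ≤ K) : (alt K).Nonempty :=
  ⟨⟨1, hK⟩, mem_alt.2 (by simp [Fin.ext_iff])⟩

theorem sum_eq_add_sum_alt (N : Fin K → ℝ) : ∑ a, N a = N 0 + ∑ a ∈ alt K, N a := by
  rw [alt, Finset.filter_ne', Finset.add_sum_erase _ _ (Finset.mem_univ 0)]

theorem μ_lt (ha : a ∈ alt K) : M.μ a < M.μ 0 :=
  M.μ_best a (mem_alt.1 ha)

theorem d_best_pos (ha : a ∈ alt K) : 0 < M.d (M.μ 0) (M.μ a) :=
  M.toSPEF.d_pos (M.μ_mem 0) (M.μ_mem a) (M.μ_lt ha).ne'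

theorem d_alt_pos (ha : a ∈ alt K) : 0 < M.d (M.μ a) (M.μ 0) :=
  M.toSPEF.d_pos (M.μ_mem a) (M.μ_mem 0) (M.μ_lt ha).ne

theorem add_mul_x1 (h : n + m ≠ 0) : (n + m) * M.x1 a n m = n * M.μ 0 + m * M.μ a := by
  rw [x1, mul_div_cancel₀ _ h]

theorem x1_eq_of_add_mul_eq (h : n + m ≠ 0) (hx : (n + m) * x = n * M.μ 0 + m * M.μ a) :
    M.x1 a n m = x := by
  rw [x1, ← hx, mul_div_cancel_left₀ _ h]

/-- An allocation with positive index samples both arms. -/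
theorem pos_of_W_pos (hn : 0 ≤ n) (hm : 0 ≤ m) (hW : 0 < M.W a n m) : 0 < n ∧ 0 < m := by
  refine ⟨hn.lt_of_ne' ?_, hm.lt_of_ne' ?_⟩
  · rintro rfl
    rcases eq_or_ne m 0 with rfl | h
    · simp [W] at hW
    · simp [W, x1, h, d] at hW
  · rintro rfl
    rcases eq_or_ne n 0 with rfl | h
    · simp [W] at hW
    · simp [W, x1, h, d] at hW

theorem x1_mem_Ioo (ha : a ∈ alt K) (hn : 0 < n) (hm : 0 < m) :
    M.x1 a n m ∈ Set.Ioo (M.μ a) (M.μ 0) := by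
  have h := add_pos hn hm
  have hμ := M.μ_lt ha
  rw [x1, Set.mem_Ioo, lt_div_iff₀ h, div_lt_iff₀ h]
  constructor <;> nlinarith

theorem x1_mem_S (ha : a ∈ alt K) (hn : 0 < n) (hm : 0 < m) : M.x1 a n m ∈ M.S :=
  SPEF.Ioo_subset_S (M.μ_mem 0) (M.μ_mem a) (M.x1_mem_Ioo ha hn hm)

theorem weighted_d_eq_W_add (hn : 0 < n) (hm : 0 < m) (y : ℝ) :
    n * M.d (M.μ 0) y + m * M.d (M.μ a) y =
      M.W a n m + (n + m) * M.d (M.x1 a n m) y :=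
  M.toSPEF.weighted_d_eq (M.add_mul_x1 (add_pos hn hm).ne') y

theorem W_le_weighted_d (ha : a ∈ alt K) (hn : 0 < n) (hm : 0 < m) {y : ℝ} (hy : y ∈ M.S) :
    M.W a n m ≤ n * M.d (M.μ 0) y + m * M.d (M.μ a) y := by
  rw [M.weighted_d_eq_W_add hn hm y]
  exact le_add_of_nonneg_right
    (mul_nonneg (add_pos hn hm).le (M.toSPEF.d_nonneg (M.x1_mem_S ha hn hm) hy))

/-- The weighted mean minimises the weighted divergence uniquely. -/
theorem x1_eq_of_weighted_d_le (ha : a ∈ alt K) (hn : 0 < n) (hm : 0 < m) {y : ℝ}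
    (hy : y ∈ M.S) (hle : n * M.d (M.μ 0) y + m * M.d (M.μ a) y ≤ M.W a n m) :
    M.x1 a n m = y := by
  by_contra hne
  have h₁ := M.weighted_d_eq_W_add (a := a) hn hm y
  have h₂ : 0 < (n + m) * M.d (M.x1 a n m) y :=
    mul_pos (add_pos hn hm) (M.toSPEF.d_pos (M.x1_mem_S ha hn hm) hy hne)
  linarith

/-- The weighted mean and the index determine the allocation. -/
theorem eq_of_x1_eq_of_W_eq {n' m' : ℝ} (ha : a ∈ alt K) (hn : 0 < n) (hm : 0 < m)
    (hn' : 0 < n') (hm' : 0 < m') (hx : M.x1 a n m = M.x1 a n' m')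
    (hW : M.W a n m = M.W a n' m') : n = n' ∧ m = m' := by
  have hS := M.x1_mem_S ha hn hm
  obtain ⟨hl, hr⟩ := M.x1_mem_Ioo ha hn hm
  have e := M.add_mul_x1 (a := a) (add_pos hn hm).ne'
  have e' := M.add_mul_x1 (a := a) (add_pos hn' hm').ne'
  have hd₀ : 0 < M.d (M.μ 0) (M.x1 a n m) := M.toSPEF.d_pos (M.μ_mem 0) hS hr.ne'
  have hd₁ : 0 < M.d (M.μ a) (M.x1 a n m) := M.toSPEF.d_pos (M.μ_mem a) hS hl.ne
  unfold W at hW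
  rw [← hx] at e' hW
  generalize M.x1 a n m = x at *
  have hprod : (n - n') * (M.μ 0 - x) = (m - m') * (x - M.μ a) := by linarith
  have hsum : (n - n') * M.d (M.μ 0) x + (m - m') * M.d (M.μ a) x = 0 := by linarith
  have hzero : (n - n') *
      (M.d (M.μ 0) x * (x - M.μ a) + M.d (M.μ a) x * (M.μ 0 - x)) = 0 := by
    linear_combination (x - M.μ a) * hsum + M.d (M.μ a) x * hprod
  have hpos : 0 < M.d (M.μ 0) x * (x - M.μ a) + M.d (M.μ a) x * (M.μ 0 - x) :=
    add_pos (mul_pos hd₀ (sub_pos.2 hl)) (mul_pos hd₁ (sub_pos.2 hr))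
  have hnn : n - n' = 0 := (mul_eq_zero.1 hzero).resolve_right hpos.ne'
  rw [hnn, zero_mul, zero_add] at hsum
  have hmm : m - m' = 0 := (mul_eq_zero.1 hsum).resolve_right hd₁.ne'
  exact ⟨sub_eq_zero.1 hnn, sub_eq_zero.1 hmm⟩

/-- The first-order conditions: all index constraints are tight and the anchor condition holds. -/
def FirstOrder (c : ℝ) (N : Fin K → ℝ) : Prop :=
  (∀ a, 0 ≤ N a) ∧ (∀ a ∈ alt K, M.W a (N 0) (N a) = c) ∧
    ∑ a ∈ alt K,
      M.d (M.μ 0) (M.x1 a (N 0) (N a)) / M.d (M.μ a) (M.x1 a (N 0) (N a)) = 1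

theorem exists_firstOrder (hc : 0 < c) : ∃ N, M.FirstOrder c N := by
  have hμ : ∀ a ∈ alt K, M.μ a < M.μ 0 := fun a ha => M.μ_lt ha
  obtain ⟨v, hv, t, ht, hsum⟩ := exists_common_level_sum_eq_one (alt K) (alt_nonempty M.two_le)
    M.μ (fun _ => M.μ 0) (fun a => M.d (M.μ 0) (M.μ a))
    (fun a => M.toSPEF.level (M.μ 0) (M.μ a)) (fun a x => M.d (M.μ 0) x / M.d (M.μ a) x)
    (fun a _ => M.toSPEF.continuousOn_level.mono
      (SPEF.Ioo_subset_S_inter_Ioi (M.μ_mem 0) (M.μ_mem a)))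
    (fun a _ => SPEF.strictAntiOn_level (M.μ_mem 0) (M.μ_mem a))
    (fun a _ => SPEF.mapsTo_level (M.μ_mem 0) (M.μ_mem a))
    (fun a ha => SPEF.surjOn_level (M.μ_mem 0) (M.μ_mem a) (hμ a ha))
    (fun a _ => (SPEF.continuousOn_d_div_d (M.μ_mem a)).mono
      (SPEF.Ioo_subset_S_inter_Ioi (M.μ_mem 0) (M.μ_mem a)))
    (fun a _ => SPEF.antitoneOn_d_div_d (M.μ_mem 0) (M.μ_mem a))
    (fun a _ x hx => SPEF.d_div_d_pos (M.μ_mem 0) (M.μ_mem a) hx)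
    (fun a ha ε hε => by
      obtain ⟨x, hx, h⟩ := SPEF.exists_lt_of_continuousOn (M.μ_mem 0) (hμ a ha)
        (SPEF.continuousOn_d_div_d (p := M.μ 0) (M.μ_mem a)) (v := ε) (by simpa using hε)
      exact ⟨x, hx, h.le⟩)
    (fun a ha => SPEF.exists_one_le_d_div_d (M.μ_mem 0) (M.μ_mem a) (hμ a ha))
  have hn : 0 < c / v := div_pos hc hv
  let N : Fin K → ℝ := fun a =>
    if a = 0 then c / v else c / v * SPEF.mixRatio (M.μ 0) (M.μ a) (t a)
  have hN0 : N 0 = c / v := if_pos rfl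
  have hN : ∀ a ∈ alt K, N a = c / v * SPEF.mixRatio (M.μ 0) (M.μ a) (t a) := fun a ha =>
    if_neg (mem_alt.1 ha)
  have hNpos : ∀ a ∈ alt K, 0 < N a := fun a ha => by
    rw [hN a ha]
    exact mul_pos hn (SPEF.mixRatio_pos (ht a ha).1)
  have hx : ∀ a ∈ alt K, M.x1 a (N 0) (N a) = t a := fun a ha => by
    refine M.x1_eq_of_add_mul_eq (add_pos (hN0 ▸ hn) (hNpos a ha)).ne' ?_
    rw [hN0, hN a ha]
    linear_combination c / v * SPEF.mixRatio_spec (p := M.μ 0) (ht a ha).1.1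
  refine ⟨N, fun a => ?_, fun a ha => ?_, ?_⟩
  · by_cases ha : a = 0
    · rw [ha, hN0]
      exact hn.le
    · exact (hNpos a (mem_alt.2 ha)).le
  · have hlevel : M.d (M.μ 0) (t a) +
        SPEF.mixRatio (M.μ 0) (M.μ a) (t a) * M.d (M.μ a) (t a) = v := (ht a ha).2
    rw [W, hx a ha, hN0, hN a ha]
    calc _ = c / v * (M.d (M.μ 0) (t a) +
          SPEF.mixRatio (M.μ 0) (M.μ a) (t a) * M.d (M.μ a) (t a)) := by ring
      _ = c := by rw [hlevel, div_mul_cancel₀ _ hv.ne']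
  · rw [← hsum]
    exact Finset.sum_congr rfl fun a ha => by rw [hx a ha]

variable {M} {N N' : Fin K → ℝ}

theorem FirstOrder.pos (hN : M.FirstOrder c N) (hc : 0 < c) (ha : a ∈ alt K) :
    0 < N 0 ∧ 0 < N a :=
  M.pos_of_W_pos (hN.1 0) (hN.1 a) ((hN.2.1 a ha).symm ▸ hc)

theorem FirstOrder.x1_mem_S (hN : M.FirstOrder c N) (hc : 0 < c) (ha : a ∈ alt K) :
    M.x1 a (N 0) (N a) ∈ M.S :=
  Bandit.x1_mem_S M ha (hN.pos hc ha).1 (hN.pos hc ha).2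

theorem FirstOrder.d_pos (hN : M.FirstOrder c N) (hc : 0 < c) (ha : a ∈ alt K) :
    0 < M.d (M.μ a) (M.x1 a (N 0) (N a)) :=
  M.toSPEF.d_pos (M.μ_mem a) (hN.x1_mem_S hc ha)
    (M.x1_mem_Ioo ha (hN.pos hc ha).1 (hN.pos hc ha).2).1.ne

/-- The total allocation as a sum of nonnegative combinations of the constraints. -/
theorem FirstOrder.sum_eq (hN : M.FirstOrder c N) (hc : 0 < c) (N' : Fin K → ℝ) :
    ∑ a, N' a = ∑ a ∈ alt K,
      (N' 0 * M.d (M.μ 0) (M.x1 a (N 0) (N a)) + N' a * M.d (M.μ a) (M.x1 a (N 0) (N a))) /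
        M.d (M.μ a) (M.x1 a (N 0) (N a)) := by
  have hterm : ∀ a ∈ alt K,
      (N' 0 * M.d (M.μ 0) (M.x1 a (N 0) (N a)) + N' a * M.d (M.μ a) (M.x1 a (N 0) (N a))) /
        M.d (M.μ a) (M.x1 a (N 0) (N a)) =
      N' 0 * (M.d (M.μ 0) (M.x1 a (N 0) (N a)) / M.d (M.μ a) (M.x1 a (N 0) (N a))) + N' a := by
    intro a ha
    rw [add_div, mul_div_assoc, mul_div_cancel_right₀ _ (hN.d_pos hc ha).ne']
  rw [Finset.sum_congr rfl hterm, Finset.sum_add_distrib, ← Finset.mul_sum, hN.2.2, mul_one,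
    sum_eq_add_sum_alt]

theorem FirstOrder.sum_self (hN : M.FirstOrder c N) (hc : 0 < c) :
    ∑ a, N a = ∑ a ∈ alt K, c / M.d (M.μ a) (M.x1 a (N 0) (N a)) := by
  rw [hN.sum_eq hc N]
  exact Finset.sum_congr rfl fun a ha => congrArg (· / _) (hN.2.1 a ha)

theorem FirstOrder.le_weighted_d (hN : M.FirstOrder c N) (hc : 0 < c)
    (h0 : ∀ a, 0 ≤ N' a) (hW : ∀ a ∈ alt K, c ≤ M.W a (N' 0) (N' a)) (ha : a ∈ alt K) :
    M.W a (N' 0) (N' a) ≤ N' 0 * M.d (M.μ 0) (M.x1 a (N 0) (N a)) +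
      N' a * M.d (M.μ a) (M.x1 a (N 0) (N a)) := by
  obtain ⟨h₁, h₂⟩ := M.pos_of_W_pos (h0 0) (h0 a) (hc.trans_le (hW a ha))
  exact M.W_le_weighted_d ha h₁ h₂ (hN.x1_mem_S hc ha)

theorem FirstOrder.sum_le (hN : M.FirstOrder c N) (hc : 0 < c)
    (h0 : ∀ a, 0 ≤ N' a) (hW : ∀ a ∈ alt K, c ≤ M.W a (N' 0) (N' a)) :
    ∑ a, N a ≤ ∑ a, N' a := by
  rw [hN.sum_self hc, hN.sum_eq hc N']
  exact Finset.sum_le_sum fun a ha => div_le_div_of_nonneg_right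
    ((hW a ha).trans (hN.le_weighted_d hc h0 hW ha)) (hN.d_pos hc ha).le

theorem FirstOrder.eq_of_sum_eq (hN : M.FirstOrder c N) (hc : 0 < c)
    (h0 : ∀ a, 0 ≤ N' a) (hW : ∀ a ∈ alt K, c ≤ M.W a (N' 0) (N' a))
    (hsum : ∑ a, N' a = ∑ a, N a) : N' = N := by
  rw [hN.sum_self hc, hN.sum_eq hc N'] at hsum
  have hterm := (Finset.sum_eq_sum_iff_of_le fun a ha => div_le_div_of_nonneg_right
    ((hW a ha).trans (hN.le_weighted_d hc h0 hW ha)) (hN.d_pos hc ha).le).1 hsum.symm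
  have hcoord : ∀ a ∈ alt K, N' 0 = N 0 ∧ N' a = N a := by
    intro a ha
    obtain ⟨h₁, h₂⟩ := M.pos_of_W_pos (h0 0) (h0 a) (hc.trans_le (hW a ha))
    have heq := (div_left_inj' (hN.d_pos hc ha).ne').1 (hterm a ha)
    have hle := hN.le_weighted_d hc h0 hW ha
    refine M.eq_of_x1_eq_of_W_eq ha h₁ h₂ (hN.pos hc ha).1 (hN.pos hc ha).2
      (M.x1_eq_of_weighted_d_le ha h₁ h₂ (hN.x1_mem_S hc ha) (heq ▸ hW a ha)) ?_
    rw [hN.2.1 a ha]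
    exact le_antisymm (hle.trans_eq heq.symm) (hW a ha)
  obtain ⟨a₀, ha₀⟩ := alt_nonempty M.two_le
  funext a
  by_cases ha : a = 0
  · rw [ha]
    exact (hcoord a₀ ha₀).1
  · exact (hcoord a (mem_alt.2 ha)).2

theorem FirstOrder.eq (hN : M.FirstOrder c N) (hN' : M.FirstOrder c N') (hc : 0 < c) :
    N' = N :=
  hN.eq_of_sum_eq hc hN'.1 (fun a ha => (hN'.2.1 a ha).ge)
    (le_antisymm (hN'.sum_le hc hN.1 fun a ha => (hN.2.1 a ha).ge)
      (hN.sum_le hc hN'.1 fun a ha => (hN'.2.1 a ha).ge))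

theorem FirstOrder.div_le_best (hN : M.FirstOrder c N) (hc : 0 < c) (ha : a ∈ alt K) :
    c / M.d (M.μ 0) (M.μ a) ≤ N 0 := by
  rw [div_le_iff₀ (M.d_best_pos ha), ← hN.2.1 a ha]
  simpa [d] using M.W_le_weighted_d ha (hN.pos hc ha).1 (hN.pos hc ha).2 (M.μ_mem a)

theorem FirstOrder.div_le_alt (hN : M.FirstOrder c N) (hc : 0 < c) (ha : a ∈ alt K) :
    c / M.d (M.μ a) (M.μ 0) ≤ N a := by
  rw [div_le_iff₀ (M.d_alt_pos ha), ← hN.2.1 a ha]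
  simpa [d] using M.W_le_weighted_d ha (hN.pos hc ha).1 (hN.pos hc ha).2 (M.μ_mem 0)

end Bandit

open Bandit

/-- the lower bound optimization problem `O` has a unique optimum,
characterized by tight index constraints and the anchor condition, with lower bounds
on the optimal allocations. -/
theorem statement_1 {K : ℕ} [NeZero K] (M : Bandit K) (c : ℝ) (hc : 0 < c) :
    ∃ Nstar : Fin K → ℝ,
      -- feasibility
      ((∀ a, 0 ≤ Nstar a) ∧ (∀ a ∈ alt K, c ≤ M.W a (Nstar 0) (Nstar a))) ∧
      -- optimality
      (∀ Nv : Fin K → ℝ, (∀ a, 0 ≤ Nv a) → (∀ a ∈ alt K, c ≤ M.W a (Nv 0) (Nv a)) →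
        ∑ a, Nstar a ≤ ∑ a, Nv a) ∧
      -- uniqueness of the optimum
      (∀ Nv : Fin K → ℝ, (∀ a, 0 ≤ Nv a) → (∀ a ∈ alt K, c ≤ M.W a (Nv 0) (Nv a)) →
        ∑ a, Nv a = ∑ a, Nstar a → Nv = Nstar) ∧
      -- characterization by the first-order conditions
      (∀ Nv : Fin K → ℝ,
        ((∀ a, 0 ≤ Nv a) ∧ (∀ a ∈ alt K, M.W a (Nv 0) (Nv a) = c) ∧
          ∑ a ∈ alt K,
            M.d (M.μ 0) (M.x1 a (Nv 0) (Nv a)) / M.d (M.μ a) (M.x1 a (Nv 0) (Nv a)) = 1) ↔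
        Nv = Nstar) ∧
      -- lower bounds on the optimal allocations
      (∀ a ∈ alt K, c / M.d (M.μ 0) (M.μ a) ≤ Nstar 0) ∧
      (∀ a ∈ alt K, c / M.d (M.μ a) (M.μ 0) ≤ Nstar a) := by
  obtain ⟨N, hN⟩ := M.exists_firstOrder hc
  exact ⟨N, ⟨hN.1, fun a ha => (hN.2.1 a ha).ge⟩, fun _ h0 hW => hN.sum_le hc h0 hW,
    fun _ h0 hW hsum => hN.eq_of_sum_eq hc h0 hW hsum,
    fun _ => ⟨fun h => hN.eq h hc, fun h => h ▸ hN⟩,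
    fun _ ha => hN.div_le_best hc ha, fun _ ha => hN.div_le_alt hc ha⟩
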